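/- Let G be a finite group acting faithfully and primitively on a finite set V, and suppose the stabiliser of each point of V is cyclic and nontrivial. Then there exist a finite field K, a bijection ι : V → K, and a subgroup S of the multiplicative group Kˣ such that, transporting the action of G along ι, the image of G in the symmetric group on K is exactly the group of affine maps {v ↦ av + b : a ∈ S, b ∈ K}. -/

import Mathlib

/-- An "affine model" of an action of a group `G` on a set `V`: a finite field `K`,
a bijection `ι : V ≃ K`, and a subgroup `S ≤ Kˣ` such that, after transporting the
action of `G` along `ι`, the image of `G` in the symmetric group on `K` is exactly the
group of affine maps `v ↦ a v + b` with `a ∈ S`, `b ∈ K`. -/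
structure AffineModel (G : Type) [Group G] (V : Type) [MulAction G V] where
  K : Type
  [fieldK : Field K]
  [finiteK : Finite K]
  ι : V ≃ K
  S : Subgroup Kˣ
  image_eq : {σ : Equiv.Perm K | ∃ g : G, ∀ x : K, σ x = ι (g • ι.symm x)} =
    {σ : Equiv.Perm K | ∃ a ∈ S, ∃ b : K, ∀ x : K, σ x = (a : K) * x + b}

/-!
Let `H` be the stabiliser of a point: an abelian maximal subgroup with trivial core. If `h ∈ H` lies
in a second conjugate of `H`, its centraliser contains both and hence is `G`, so `h` lies in the
core. Thus `H` is malnormal, and the transfer `G → H` restricts to the identity on `H`. Its kernel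
`N` is a normal complement of `H` on which every `h ≠ 1` in `H` acts without fixed points, and by
maximality of `H` this action is irreducible. If `1 ≠ h ∈ H`, then `h` normalises exactly one Sylow
`p`-subgroup of `N`; since `H` is abelian, all of `H` normalises it, so it is all of `N`, and then
the centre, being nontrivial, is all of `N` too. (If `H = 1`, then `N` has no proper nontrivial
subgroups.) So `N` is a simple module over the commutative ring `ℤ[H]`, that is, a field
`K = ℤ[H] ⧸ 𝔪` on which `H` acts by scalars. Finally, `N` acts regularly on `V`.
-/

open MulAction Subgroup MonoidHom
open scoped Pointwise IsMulCommutative MonoidAlgebra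

section Malnormal

variable {G : Type*} [Group G]

/-- A subgroup is malnormal if it meets its conjugate by any element outside it trivially.
A nontrivial proper malnormal subgroup of a finite group is a Frobenius complement. -/
def IsMalnormal (H : Subgroup G) : Prop :=
  ∀ g ∉ H, ∀ h ∈ H, g⁻¹ * h * g ∈ H → h = 1

theorem normalCore_stabilizer_eq_bot {V : Type*} [MulAction G V] [IsPretransitive G V]
    [FaithfulSMul G V] (v : V) : (stabilizer G v).normalCore = ⊥ := by
  refine (eq_bot_iff_forall _).mpr fun h hh ↦ FaithfulSMul.eq_of_smul_eq_smul fun w : V ↦ ?_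
  obtain ⟨g, rfl⟩ := exists_smul_eq G v w
  have hfix : (g⁻¹ * h * g⁻¹⁻¹) • v = v := hh g⁻¹
  simpa [mul_smul, inv_smul_eq_iff] using hfix

theorem isMalnormal_of_isCoatom_of_normalCore_eq_bot {H : Subgroup G} [IsMulCommutative H]
    (hmax : IsCoatom H) (hcore : H.normalCore = ⊥) : IsMalnormal H := by
  intro g hg h hh hconj
  suffices h ∈ H.normalCore by simpa [hcore] using this
  by_cases hHg : H.map (MulAut.conj g).toMonoidHom = H
  · have hnormal : H.Normal := normalizer_eq_top_iff.mp <| hmax.2 _ <|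
      le_normalizer.lt_of_not_ge fun hle ↦ hg (hle (mem_normalizer_iff_map_conj_eq.mpr hHg))
    rwa [normalCore_eq_self]
  · have hmax_conj : IsCoatom (H.map (MulAut.conj g).toMonoidHom) :=
      ((MulAut.conj g).mapSubgroup.isCoatom_iff H).mpr hmax
    have hle : H ≤ centralizer {h} := fun x hx ↦
      mem_centralizer_singleton_iff.mpr (setLike_mul_comm hx hh)
    have hle_conj : H.map (MulAut.conj g).toMonoidHom ≤ centralizer {h} := by
      rintro _ ⟨x, hx, rfl⟩
      have hcomm : x * (g⁻¹ * h * g) = g⁻¹ * h * g * x := setLike_mul_comm hx hconj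
      rw [mem_centralizer_singleton_iff]
      simpa [mul_assoc] using congr(g * $hcomm * g⁻¹)
    have htop : centralizer {h} = ⊤ := top_le_iff.mp <|
      (hmax.sup_eq_top_of_ne hmax_conj (Ne.symm hHg)).ge.trans (sup_le hle hle_conj)
    intro b
    have hb : b * h = h * b := mem_centralizer_singleton_iff.mp (htop ▸ mem_top b)
    simpa [hb] using hh

theorem out_mk_orbitRel_of_forall_smul_eq {Γ α : Type*} [Group Γ] [MulAction Γ α] {a : α}
    (ha : ∀ g : Γ, g • a = a) : (Quotient.mk (orbitRel Γ α) a).out = a := by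
  obtain ⟨g, hg⟩ := orbitRel_apply.mp (Quotient.mk_out (s := orbitRel Γ α) a)
  exact hg.symm.trans (ha g)

theorem out_mem_iff_eq_mk_one {H : Subgroup G} (q : G ⧸ H) :
    q.out ∈ H ↔ q = ((1 : G) : G ⧸ H) := by
  conv_rhs => rw [← QuotientGroup.out_eq' q, eq_comm, QuotientGroup.eq]
  simp

-- Malnormality makes every factor of the transfer trivial except the one at the trivial coset.
theorem IsMalnormal.transfer_id_apply {H : Subgroup G} [H.FiniteIndex] [IsMulCommutative H]
    (hH : IsMalnormal H) (h : H) : transfer (MonoidHom.id H) (h : G) = h := by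
  classical
  let := Fintype.ofFinite (Quotient (orbitRel (zpowers (h : G)) (G ⧸ H)))
  have hfix : (h : G) • ((1 : G) : G ⧸ H) = ((1 : G) : G ⧸ H) := by
    rw [MulAction.Quotient.smul_coe, QuotientGroup.eq]
    simp
  have hout : (Quotient.mk (orbitRel (zpowers (h : G)) (G ⧸ H)) ((1 : G) : G ⧸ H)).out =
      ((1 : G) : G ⧸ H) :=
    out_mk_orbitRel_of_forall_smul_eq fun g ↦ smul_eq_self_of_mem_zpowers g.2 hfix
  rw [transfer_eq_prod_quotient_orbitRel_zpowers_quot,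
    Finset.prod_eq_single (Quotient.mk _ ((1 : G) : G ⧸ H)) ?_ (by simp)]
  · have hperiod : Function.minimalPeriod ((h : G) • ·) ((1 : G) : G ⧸ H) = 1 :=
      Function.minimalPeriod_eq_one_iff_isFixedPt.mpr hfix
    have hmem : ((1 : G) : G ⧸ H).out ∈ H := (out_mem_iff_eq_mk_one _).mpr rfl
    ext
    simp [hout, hperiod, mul_assoc, setLike_mul_comm h.2 hmem]
  · intro q _ hq
    have hnotMem : q.out.out ∉ H := fun hmem ↦
      hq <| by rw [← (out_mem_iff_eq_mk_one _).mp hmem, Quotient.out_eq]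
    have hpow := hH _ hnotMem _ (pow_mem h.2 _)
      (QuotientGroup.out_conj_pow_minimalPeriod_mem H (h : G) q.out)
    ext
    simp [hpow]

theorem isComplement'_ker_of_retraction {H : Subgroup G} (T : G →* H) (hT : ∀ h : H, T h = h) :
    T.ker.IsComplement' H := by
  refine isComplement'_of_disjoint_and_mul_eq_univ (disjoint_def.mpr fun {x} hx hxH ↦ ?_) ?_
  · simpa [mem_ker.mp hx, eq_comm] using congrArg Subtype.val (hT ⟨x, hxH⟩)
  · refine Set.eq_univ_of_forall fun g ↦ ⟨g * (T g : G)⁻¹, ?_, T g, (T g).2, by simp⟩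
    simp [mem_ker, hT]

theorem IsMalnormal.exists_normal_isComplement' {H : Subgroup G} [H.FiniteIndex]
    [IsMulCommutative H] (hH : IsMalnormal H) :
    ∃ N : Subgroup G, N.Normal ∧ N.IsComplement' H :=
  ⟨_, normal_ker _, isComplement'_ker_of_retraction _ hH.transfer_id_apply⟩

end Malnormal

section FixedPointFree

variable {N : Type*} [Group N]

theorem smul_smul_sylow {H : Type*} [Group H] [MulDistribMulAction H N] {p : ℕ} (h : H) (n : N)
    (P : Sylow p N) : h • n • P = (h • n) • h • P := by
  refine Sylow.ext (Subgroup.ext fun x ↦ ?_)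
  simp [Sylow.pointwise_smul_def, Sylow.coe_subgroup_smul,
    mem_pointwise_smul_iff_inv_smul_mem, ← map_inv]

variable [Finite N]

theorem mem_of_commutatorMap_mem {φ : N →* N} (hφ : FixedPointFree φ) {K : Subgroup N}
    (hK : K ≤ K.comap φ) {n : N} (hn : commutatorMap φ n ∈ K) : n ∈ K := by
  let ψ : K →* K := (φ.domRestrict K).codRestrict K fun k ↦ hK k.2
  have hψ : FixedPointFree ψ := fun k hk ↦ Subtype.ext (hφ k (congrArg Subtype.val hk))
  obtain ⟨k, hk⟩ := hψ.commutatorMap_surjective ⟨_, hn⟩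
  rw [← hφ.commutatorMap_injective (congrArg Subtype.val hk)]
  exact k.2

theorem existsUnique_sylow_smul_eq {H : Type*} [Group H] [MulDistribMulAction H N] {p : ℕ}
    [Fact p.Prime] {h : H} (hh : FixedPointFree (MulDistribMulAction.toMonoidHom N h)) :
    ∃! P : Sylow p N, h • P = P := by
  obtain ⟨P, hP⟩ : ∃ P : Sylow p N, h • P = P := by
    obtain ⟨P⟩ : Nonempty (Sylow p N) := inferInstance
    obtain ⟨n, hn⟩ := exists_smul_eq N (h • P) P
    obtain ⟨m, rfl⟩ := hh.commutatorMap_surjective n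
    refine ⟨m⁻¹ • P, ?_⟩
    rw [smul_smul_sylow, eq_inv_smul_iff, smul_smul]
    simpa [div_eq_mul_inv] using hn
  refine ⟨P, hP, fun Q hQ ↦ ?_⟩
  obtain ⟨n, rfl⟩ := exists_smul_eq N P Q
  have hnorm : normalizer P ≤ (normalizer P).comap (MulDistribMulAction.toMonoidHom N h) := by
    intro k hk
    rw [← Sylow.smul_eq_iff_mem_normalizer] at hk
    rw [mem_comap, ← Sylow.smul_eq_iff_mem_normalizer]
    simpa [smul_smul_sylow, hP] using congr(h • $hk)
  rw [smul_smul_sylow, hP] at hQ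
  rw [Sylow.smul_eq_iff_mem_normalizer, ← inv_mem_iff]
  refine mem_of_commutatorMap_mem hh hnorm ?_
  rw [← Sylow.smul_eq_iff_mem_normalizer]
  simp [mul_smul, hQ]

end FixedPointFree

section Irreducible

variable (H N : Type*) [Group H] [Group N] [MulDistribMulAction H N]

/-- A group `H` acts irreducibly by automorphisms on `N ≠ 1` if no proper nontrivial subgroup of `N`
is `H`-invariant. For commutative `N` this says that `N` is a simple `ℤ[H]`-module. -/
structure IsIrreducibleAction : Prop where
  nontrivial : Nontrivial N
  eq_bot_or_eq_top (M : Subgroup N) : (∀ h : H, ∀ x ∈ M, h • x ∈ M) → M = ⊥ ∨ M = ⊤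

variable {H N}

namespace IsIrreducibleAction

theorem isMulCommutative_of_subsingleton [Subsingleton H] (hirr : IsIrreducibleAction H N) :
    IsMulCommutative N := by
  have := hirr.nontrivial
  obtain ⟨x, hx⟩ := exists_ne (1 : N)
  have htop : zpowers x = ⊤ := (hirr.eq_bot_or_eq_top (zpowers x) fun h y hy ↦ by
    rwa [Subsingleton.elim h 1, one_smul]).resolve_left (by simpa using hx)
  have := isCyclic_iff_exists_zpowers_eq_top.mpr ⟨x, htop⟩
  infer_instance

theorem isMulCommutative_of_isPGroup [Finite N] {p : ℕ} [Fact p.Prime]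
    (hirr : IsIrreducibleAction H N) (hN : IsPGroup p N) : IsMulCommutative N := by
  have := hirr.nontrivial
  refine center_eq_top_iff.mp ((hirr.eq_bot_or_eq_top (center N) fun h x hx ↦ ?_).resolve_left ?_)
  · exact (Subgroup.characteristic_iff_le_comap.mp inferInstance
      (MulDistribMulAction.toMulEquiv N h)) hx
  · have := hN.center_nontrivial
    exact (nontrivial_iff_ne_bot _).mp this

theorem isMulCommutative_of_fixedPointFree [Finite N] [IsMulCommutative H]
    (hirr : IsIrreducibleAction H N) {h : H}
    (hh : FixedPointFree (MulDistribMulAction.toMonoidHom N h)) : IsMulCommutative N := by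
  have := hirr.nontrivial
  obtain ⟨p, hp, hdvd⟩ := Nat.exists_prime_and_dvd (Finite.one_lt_card (α := N)).ne'
  have : Fact p.Prime := ⟨hp⟩
  obtain ⟨P, hP, hunique⟩ := existsUnique_sylow_smul_eq (p := p) hh
  have hinv (g : H) : g • P = P := hunique _ <| by
    simp only [smul_smul, mul_comm h g, mul_smul, hP]
  have htop : (P : Subgroup N) = ⊤ := by
    refine (hirr.eq_bot_or_eq_top P fun g x hx ↦ ?_).resolve_left (P.ne_bot_of_dvd_card hdvd)
    rw [← hinv g]
    exact smul_mem_pointwise_smul x g (P : Subgroup N) hx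
  exact hirr.isMulCommutative_of_isPGroup (p := p) <|
    (htop ▸ P.isPGroup' : IsPGroup p (⊤ : Subgroup N)).of_equiv topEquiv

theorem isMulCommutative [Finite N] [IsMulCommutative H] (hirr : IsIrreducibleAction H N)
    (hfix : ∀ h : H, h ≠ 1 → FixedPointFree (MulDistribMulAction.toMonoidHom N h)) :
    IsMulCommutative N := by
  rcases subsingleton_or_nontrivial H with _ | _
  · exact hirr.isMulCommutative_of_subsingleton
  · obtain ⟨h, hh⟩ := exists_ne (1 : H)
    exact hirr.isMulCommutative_of_fixedPointFree (hfix h hh)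

end IsIrreducibleAction

theorem IsIrreducibleAction.isSimpleOrder_subrepresentation {N : Type*} [CommGroup N]
    [MulDistribMulAction H N] (hirr : IsIrreducibleAction H N) :
    IsSimpleOrder (Subrepresentation (Representation.ofMulDistribMulAction H N)) := by
  have := hirr.nontrivial
  refine { exists_pair_ne := ⟨⊥, ⊤, fun h ↦ ?_⟩, eq_bot_or_eq_top := fun W ↦ ?_ }
  · exact bot_ne_top (congrArg Subrepresentation.toSubmodule h)
  · rcases hirr.eq_bot_or_eq_top (AddSubgroup.toSubgroup' W.toSubmodule.toAddSubgroup)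
      fun h x hx ↦ W.apply_mem_toSubmodule h hx with hW | hW
    · exact .inl <| SetLike.ext fun a ↦ SetLike.ext_iff.mp hW a.toMul
    · exact .inr <| SetLike.ext fun a ↦ SetLike.ext_iff.mp hW a.toMul

universe u v in
theorem exists_field_addEquiv_of_isSimpleOrder_subrepresentation {k : Type u} {H : Type v}
    {A : Type*} [CommRing k] [CommMonoid H] [AddCommGroup A] [Module k A] (ρ : Representation k H A)
    [IsSimpleOrder (Subrepresentation ρ)] :
    ∃ (K : Type max u v) (_ : Field K) (e : A ≃+ K) (χ : H →* K), ∀ h a, e (ρ h a) = χ h * e a := by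
  have : IsSimpleModule k[H] ρ.asModule := (isSimpleModule_iff _ _).mpr <|
    Subrepresentation.subrepresentationSubmoduleOrderIso.isSimpleOrder_iff.mp inferInstance
  obtain ⟨I, _, ⟨l⟩⟩ := isSimpleModule_iff_quot_maximal.mp this
  refine ⟨k[H] ⧸ I, Ideal.Quotient.field I, ρ.asModuleEquiv.symm.toAddEquiv.trans l.toAddEquiv,
    (Ideal.Quotient.mk I : k[H] →* k[H] ⧸ I).comp (MonoidAlgebra.of k H), fun h a ↦ ?_⟩
  exact (congrArg l (ρ.asModuleEquiv_symm_map_rho h a)).trans (map_smul l _ _)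

end Irreducible

section RegularComplement

variable {G V : Type*} [Group G] [MulAction G V] [IsPretransitive G V] {v : V} {N : Subgroup G}

/-- A complement of the stabiliser of `v` acts regularly, so `n ↦ n • v` identifies it with `V`. -/
noncomputable def complementEquiv (hcompl : N.IsComplement' (stabilizer G v)) : N ≃ V :=
  hcompl.leftQuotientEquiv.symm.trans <| Equiv.ofBijective (ofQuotientStabilizer G v)
    ⟨injective_ofQuotientStabilizer G v, fun w ↦
      let ⟨g, hg⟩ := exists_smul_eq G v w
      ⟨(g : G ⧸ stabilizer G v), hg⟩⟩

theorem complementEquiv_apply (hcompl : N.IsComplement' (stabilizer G v)) (n : N) :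
    complementEquiv hcompl n = (n : G) • v := rfl

end RegularComplement

section Conjugation

variable {G : Type*} [Group G]

/-- The action of a subgroup `H` on a normal subgroup `N` by conjugation. It is only a local
instance because `N` may carry other actions of `H`. -/
abbrev conjAction (H N : Subgroup G) [N.Normal] : MulDistribMulAction H N :=
  MulDistribMulAction.compHom N ((MulAut.conjNormal : G →* MulAut N).comp H.subtype)

attribute [local instance] conjAction

variable {H N : Subgroup G} [N.Normal]

theorem coe_conjAction_smul (h : H) (n : N) : ((h • n : N) : G) = h * n * (h : G)⁻¹ := rfl

theorem IsMalnormal.fixedPointFree_conjAction (hH : IsMalnormal H) (hdisj : Disjoint N H)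
    {h : H} (hh : h ≠ 1) : FixedPointFree (MulDistribMulAction.toMonoidHom N h) := by
  intro n hn
  have hcomm : (h : G) * n = n * h := mul_inv_eq_iff_eq_mul.mp (congrArg Subtype.val hn)
  by_contra hne
  have hnH : (n : G) ∉ H := fun hnH ↦ hne (Subtype.ext (disjoint_def.mp hdisj n.2 hnH))
  refine hh (Subtype.ext (hH n hnH h h.2 ?_))
  simp [mul_assoc, hcomm]

theorem le_normalizer_map_subtype_of_forall_smul_mem {M : Subgroup N}
    (hM : ∀ h : H, ∀ x ∈ M, h • x ∈ M) : H ≤ normalizer (M.map N.subtype) := by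
  have hconj (h : H) : ∀ g ∈ M.map N.subtype, (h : G) * g * (h : G)⁻¹ ∈ M.map N.subtype := by
    rintro _ ⟨x, hx, rfl⟩
    exact mem_map_of_mem N.subtype (hM h x hx)
  intro h hh
  refine mem_normalizer_iff.mpr fun g ↦ ⟨hconj ⟨h, hh⟩ g, fun hg ↦ ?_⟩
  simpa [mul_assoc] using hconj ⟨h⁻¹, inv_mem hh⟩ _ hg

theorem isIrreducibleAction_conjAction (hmax : IsCoatom H) (hcompl : N.IsComplement' H) :
    IsIrreducibleAction H N where
  nontrivial := by
    rw [nontrivial_iff_ne_bot]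
    rintro rfl
    exact hmax.1 (isComplement'_bot_left.mp hcompl)
  eq_bot_or_eq_top M hM := by
    have hnorm := le_normalizer_map_subtype_of_forall_smul_mem hM
    have hdisj {g : G} : g ∈ N → g ∈ H → g = 1 := disjoint_def.mp hcompl.disjoint
    rcases hmax.le_iff.mp (le_sup_right : H ≤ M.map N.subtype ⊔ H) with hsup | hsup
    · right
      refine (eq_top_iff' M).mpr fun n ↦ ?_
      have hn : (n : G) ∈ (M.map N.subtype : Set G) * H := by
        rw [← coe_mul_of_right_le_normalizer_left _ _ hnorm, hsup]
        trivial
      obtain ⟨_, ⟨m, hm, rfl⟩, h, hh, (hmh : (m : G) * h = n)⟩ := hn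
      have h_mem : h ∈ N := by
        rw [← mul_mem_cancel_left m.2]
        exact hmh ▸ n.2
      have hmn : m = n := by simpa [hdisj h_mem hh] using hmh
      rwa [← hmn]
    · left
      refine (eq_bot_iff_forall M).mpr fun m hm ↦ Subtype.ext (hdisj m.2 ?_)
      rw [← hsup]
      exact mem_sup_left (mem_map_of_mem N.subtype hm)

theorem mul_smul_complementEquiv {V : Type*} [MulAction G V] [IsPretransitive G V] {v : V}
    (hcompl : N.IsComplement' (stabilizer G v)) (n m : N) (h : stabilizer G v) :
    ((n : G) * h) • complementEquiv hcompl m = complementEquiv hcompl (n * h • m) := by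
  have hfix : (h : G)⁻¹ • v = v := inv_smul_eq_iff.mpr h.2.symm
  simp [complementEquiv_apply, coe_conjAction_smul, mul_smul, hfix]

/-- The affine model in which the complement `N` acts by translations and the stabiliser acts by
multiplication with the values of the character `χ`. -/
noncomputable def AffineModel.ofComplement {G V : Type} [Group G] [MulAction G V]
    [IsPretransitive G V] {v : V} {N : Subgroup G} [N.Normal]
    (hcompl : N.IsComplement' (stabilizer G v)) {K : Type} [Field K] [Finite K]
    (e : Additive N ≃+ K) (χ : stabilizer G v →* Kˣ)
    (he : ∀ h n, e (.ofMul (h • n)) = χ h * e (.ofMul n)) : AffineModel G V where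
  K := K
  ι := (complementEquiv hcompl).symm.trans (Additive.ofMul.trans e.toEquiv)
  S := χ.range
  image_eq := by
    set ι := (complementEquiv hcompl).symm.trans (Additive.ofMul.trans e.toEquiv) with hι
    have key (n : N) (h : stabilizer G v) (x : K) :
        ι (((n : G) * h) • ι.symm x) = χ h * x + e (.ofMul n) := by
      obtain ⟨m, rfl⟩ := (Additive.ofMul.trans e.toEquiv).surjective x
      simp [hι, mul_smul_complementEquiv, he, add_comm]
    ext σ
    constructor
    · rintro ⟨g, hg⟩
      refine ⟨χ (hcompl.equiv g).2, ⟨_, rfl⟩, e (.ofMul (hcompl.equiv g).1), fun x ↦ ?_⟩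
      rw [hg, ← key, hcompl.equiv_fst_mul_equiv_snd]
    · rintro ⟨_, ⟨h, rfl⟩, b, hσ⟩
      refine ⟨(e.symm b).toMul * h, fun x ↦ ?_⟩
      rw [hσ, key]
      simp

theorem affineModel_of_primitive_cyclic_stabilizers_general {G V : Type} [Group G] [Finite G]
    [MulAction G V] [FaithfulSMul G V] [IsPretransitive G V] {v : V}
    (hmax : IsCoatom (stabilizer G v)) [IsMulCommutative (stabilizer G v)] :
    Nonempty (AffineModel G V) := by
  have hmal : IsMalnormal (stabilizer G v) :=
    isMalnormal_of_isCoatom_of_normalCore_eq_bot hmax (normalCore_stabilizer_eq_bot v)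
  obtain ⟨N, _, hcompl⟩ := hmal.exists_normal_isComplement'
  have hirr : IsIrreducibleAction (stabilizer G v) N := isIrreducibleAction_conjAction hmax hcompl
  have : IsMulCommutative N :=
    hirr.isMulCommutative fun _ ↦ hmal.fixedPointFree_conjAction hcompl.disjoint
  have := hirr.isSimpleOrder_subrepresentation
  obtain ⟨K, _, e, χ, he⟩ := exists_field_addEquiv_of_isSimpleOrder_subrepresentation
    (Representation.ofMulDistribMulAction (stabilizer G v) N)
  have : Finite K := .of_equiv _ e.toEquiv
  exact ⟨.ofComplement hcompl e χ.toHomUnits he⟩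

end Conjugation

/-- Let `G` be a finite group acting faithfully and primitively on a
finite (nonempty) set `V`, with every point stabiliser cyclic and nontrivial.  Then
there exist a finite field `K`, a bijection `ι : V → K`, and a subgroup `S ≤ Kˣ` such
that, transporting the action of `G` along `ι`, the image of `G` in the symmetric group
on `K` is exactly the group of affine maps `{v ↦ a v + b : a ∈ S, b ∈ K}`. -/
theorem affineModel_of_primitive_cyclic_stabilizers
    (G : Type) [Group G] [Finite G] (V : Type) [Finite V] [Nonempty V] [MulAction G V]
    (hfaith : ∀ g : G, (∀ v : V, g • v = v) → g = 1)
    (htrans : MulAction.IsPretransitive G V)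
    (hmax : ∀ v : V, IsCoatom (MulAction.stabilizer G v))
    (hcyc : ∀ v : V, IsCyclic (MulAction.stabilizer G v))
    (hnt : ∀ v : V, MulAction.stabilizer G v ≠ ⊥) :
    Nonempty (AffineModel G V) := by
  obtain ⟨v⟩ := ‹Nonempty V›
  have : FaithfulSMul G V := faithfulSMul_iff.mpr hfaith
  have := hcyc v
  exact affineModel_of_primitive_cyclic_stabilizers_general (hmax v)
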